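/- Let H = (V, 𝓔) be a finite weighted hypergraph with total weight W and fix a threshold ρ ∈ (0,1]. Then there exists a family {x(τ)}_{τ∈[0,1]} of optimal solutions of the conformal-subgraph LP at coverage parameter ε = 1 − τ such that the rounded sets K_τ = {v ∈ V : x_v(τ) ≥ ρ} satisfy: (i) for all τ₁ < τ₂ in [0,1], K_{τ₁} ⊆ K_{τ₂}; and (ii) for every τ ∈ [0,1] there exists λ ≥ 0 such that K_τ minimizes Φ(·, λ) = |·| − λ·e(·) over all subsets of V. -/

import Mathlib

open Finset

/-- Total induced weight of hyperedges contained in `K`. -/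
noncomputable def inducedWeight {V : Type*} [DecidableEq V]
    (𝓔 : Finset (Finset V)) (w : Finset V → ℝ) (K : Finset V) : ℝ :=
  ∑ e ∈ 𝓔.filter (fun e => e ⊆ K), w e

/-- Total weight of the hypergraph. -/
noncomputable def totalWeight {V : Type*} [DecidableEq V]
    (𝓔 : Finset (Finset V)) (w : Finset V → ℝ) : ℝ :=
  ∑ e ∈ 𝓔, w e

/-- The Lagrangian objective `Φ(K, λ) = |K| - λ·e(K)`. -/
noncomputable def lagObj {V : Type*} [DecidableEq V]
    (𝓔 : Finset (Finset V)) (w : Finset V → ℝ) (K : Finset V) (lam : ℝ) : ℝ :=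
  (K.card : ℝ) - lam * inducedWeight 𝓔 w K

/-- Feasibility for the conformal-subgraph LP at coverage parameter `ε`. -/
def LPFeasible {V : Type*} [Fintype V] [DecidableEq V]
    (𝓔 : Finset (Finset V)) (w : Finset V → ℝ) (ε : ℝ)
    (x : V → ℝ) (z : Finset V → ℝ) : Prop :=
  (∀ v, x v ∈ Set.Icc (0:ℝ) 1) ∧
  (∀ e ∈ 𝓔, z e ∈ Set.Icc (0:ℝ) 1) ∧
  (∀ e ∈ 𝓔, ∀ v ∈ e, z e ≤ x v) ∧
  (1 - ε) * totalWeight 𝓔 w ≤ ∑ e ∈ 𝓔, w e * z e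

/-- `z_e = min_{v ∈ e} x_v` (with the convention `1` for an empty hyperedge). -/
noncomputable def minOnEdge {V : Type*} (x : V → ℝ) (e : Finset V) : ℝ :=
  if h : e.Nonempty then e.inf' h x else 1

/-!
Rounding is integration: if `θ` is uniform on `(0, 1]`, then `∑ v, x v` and the LP coverage
`∑ e, w e * min_{v ∈ e} x v` are the expectations of `|K|` and `e(K)` for the superlevel set
`K = {v | θ ≤ x v}`. Hence a vector all of whose superlevel sets minimize the same Lagrangian
`|K| - λ e(K)` is optimal among the vectors with at least its coverage.

Such vectors are found by increasing `λ` from `0`. A minimizer `A` stays one until some `K` with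
`e(A) < e(K)` ties with it; as `e` is supermodular, `B = A ∪ K` is then a minimizer too. Moving
linearly from the indicator of `A` to that of `B` meets every coverage between `e(A)` and `e(B)`,
with superlevel sets `A` and `B` only. Repeating this yields a path of optimal solutions that
increases in every coordinate, so its superlevel sets are nested for every threshold.
-/

section LagrangeMinimizer

variable {ι : Type*} {c f : ι → ℝ} {lam : ℝ}

/-- The index `a` minimizes the Lagrangian `c - lam * f` attached to minimizing the cost `c` under
a lower bound on the value `f`. With `c = |·|` and `f = inducedWeight 𝓔 w` this is `lagObj`. -/
def IsLagrangeMinimizer (c f : ι → ℝ) (lam : ℝ) (a : ι) : Prop :=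
  ∀ k, c a - lam * f a ≤ c k - lam * f k

namespace IsLagrangeMinimizer

theorem exists_tie_of_lt [Finite ι] {a u : ι} (ha : IsLagrangeMinimizer c f lam a)
    (hu : f a < f u) :
    ∃ lam' ≥ lam, ∃ b, f a < f b ∧
      IsLagrangeMinimizer c f lam' a ∧ IsLagrangeMinimizer c f lam' b := by
  obtain ⟨b, hab : f a < f b, hb⟩ :=
    Set.exists_min_image {k | f a < f k} (fun k => (c k - c a) / (f k - f a)) (Set.toFinite _)
      ⟨u, hu⟩
  -- The least cost per unit of gained value is the multiplier at which `a` first ties.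
  set slope := (c b - c a) / (f b - f a) with hslope
  have slope_mul : slope * (f b - f a) = c b - c a := div_mul_cancel₀ _ (sub_pos.2 hab).ne'
  have lam_le_slope : lam ≤ slope := by
    rw [hslope, le_div_iff₀ (sub_pos.2 hab)]
    linarith [ha b]
  have ha' : IsLagrangeMinimizer c f slope a := by
    intro k
    rcases lt_or_ge (f a) (f k) with hk | hk
    · have := (le_div_iff₀ (sub_pos.2 hk)).1 (hb k hk)
      linarith
    · have := mul_le_mul_of_nonneg_right lam_le_slope (sub_nonneg.2 hk)
      linarith [ha k]
  exact ⟨slope, lam_le_slope, b, hab, ha', fun k => by linarith [ha' k]⟩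

variable {α : Type*} [Lattice α] {c f : α → ℝ} {a b u : α}

protected theorem sup (hc : ∀ a b, c (a ⊔ b) + c (a ⊓ b) ≤ c a + c b)
    (hf : ∀ a b, f a + f b ≤ f (a ⊔ b) + f (a ⊓ b)) (hlam : 0 ≤ lam)
    (ha : IsLagrangeMinimizer c f lam a) (hb : IsLagrangeMinimizer c f lam b) :
    IsLagrangeMinimizer c f lam (a ⊔ b) := fun k => by
  linarith [ha (a ⊓ b), hb k, hc a b, mul_le_mul_of_nonneg_left (hf a b) hlam]

theorem exists_le_tie_of_lt [Finite α] (hc : ∀ a b, c (a ⊔ b) + c (a ⊓ b) ≤ c a + c b)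
    (hf : ∀ a b, f a + f b ≤ f (a ⊔ b) + f (a ⊓ b)) (hf_mono : Monotone f) (hlam : 0 ≤ lam)
    (ha : IsLagrangeMinimizer c f lam a) (hu : f a < f u) :
    ∃ lam' ≥ 0, ∃ b ≥ a, f a < f b ∧
      IsLagrangeMinimizer c f lam' a ∧ IsLagrangeMinimizer c f lam' b := by
  obtain ⟨lam', hlam', b, hab, ha', hb'⟩ := ha.exists_tie_of_lt hu
  have hlam'_nonneg : 0 ≤ lam' := hlam.trans hlam'
  exact ⟨lam', hlam'_nonneg, a ⊔ b, le_sup_left, hab.trans_le (hf_mono le_sup_right), ha',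
    ha'.sup hc hf hlam'_nonneg hb'⟩

end IsLagrangeMinimizer

end LagrangeMinimizer

section LovaszExtension

open MeasureTheory

variable {V : Type*} [Fintype V] {c f : Finset V → ℝ} {x y : V → ℝ} {lam : ℝ}

/-- The rounding of `x` at threshold `θ`. -/
noncomputable def superlevel (x : V → ℝ) (θ : ℝ) : Finset V := {v | θ ≤ x v}

@[simp]
theorem mem_superlevel {θ : ℝ} {v : V} : v ∈ superlevel x θ ↔ θ ≤ x v := by
  simp [superlevel]

/-- The Lovász extension of a set function, as the average of its values on the superlevel sets
of `x`. It is meant for `x` with values in `[0, 1]` and does not normalize `g ∅` to `0`. -/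
noncomputable def lovaszExtension (g : Finset V → ℝ) (x : V → ℝ) : ℝ :=
  ∫ θ in Set.Ioc (0 : ℝ) 1, g (superlevel x θ)

theorem integrableOn_superlevel (g : Finset V → ℝ) (x : V → ℝ) :
    IntegrableOn (fun θ => g (superlevel x θ)) (Set.Ioc (0 : ℝ) 1) := by
  let _ : MeasurableSpace (Finset V) := ⊤
  have : DiscreteMeasurableSpace (Finset V) := ⟨fun _ => trivial⟩
  have measurable_superlevel : Measurable (superlevel x) := by
    refine measurable_to_countable' fun K => ?_
    have preimage_eq : superlevel x ⁻¹' {K} = ⋂ v, {θ | θ ≤ x v ↔ v ∈ K} := by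
      ext θ
      simp [Finset.ext_iff]
    rw [preimage_eq]
    exact MeasurableSet.iInter fun v => measurableSet_Iic.iff (MeasurableSet.const _)
  exact Integrable.of_finite.comp_measurable measurable_superlevel

theorem le_lovaszExtension {g : Finset V → ℝ} {m : ℝ} (hg : ∀ K, m ≤ g K) (x : V → ℝ) :
    m ≤ lovaszExtension g x :=
  calc m = ∫ _ in Set.Ioc (0 : ℝ) 1, m := by simp
    _ ≤ lovaszExtension g x :=
      integral_mono (integrable_const m) (integrableOn_superlevel g x) fun _ => hg _

theorem lovaszExtension_sub_const_mul (c f : Finset V → ℝ) (lam : ℝ) (x : V → ℝ) :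
    lovaszExtension (fun K => c K - lam * f K) x =
      lovaszExtension c x - lam * lovaszExtension f x := by
  simp only [lovaszExtension]
  rw [integral_sub (integrableOn_superlevel c x) ((integrableOn_superlevel f x).const_mul lam),
    integral_const_mul]

theorem lovaszExtension_le_of_isLagrangeMinimizer (hlam : 0 ≤ lam)
    (hx : ∀ θ ∈ Set.Ioc (0 : ℝ) 1, IsLagrangeMinimizer c f lam (superlevel x θ))
    (hxy : lovaszExtension f x ≤ lovaszExtension f y) :
    lovaszExtension c x ≤ lovaszExtension c y := by
  have lagrangian_le : lovaszExtension (fun K => c K - lam * f K) x ≤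
      lovaszExtension (fun K => c K - lam * f K) y :=
    setIntegral_mono_on (integrableOn_superlevel (fun K => c K - lam * f K) x)
      (integrableOn_superlevel (fun K => c K - lam * f K) y) measurableSet_Ioc
      fun θ hθ => hx θ hθ _
  rw [lovaszExtension_sub_const_mul, lovaszExtension_sub_const_mul] at lagrangian_le
  linarith [mul_le_mul_of_nonneg_left hxy hlam]

theorem integrableOn_indicator_Iic (a : ℝ) :
    IntegrableOn ((Set.Iic a).indicator (1 : ℝ → ℝ)) (Set.Ioc 0 1) :=
  (integrable_const (1 : ℝ)).indicator measurableSet_Iic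

theorem setIntegral_indicator_Iic {a : ℝ} (ha : a ∈ Set.Icc (0 : ℝ) 1) :
    ∫ θ in Set.Ioc (0 : ℝ) 1, (Set.Iic a).indicator (1 : ℝ → ℝ) θ = a := by
  rw [setIntegral_indicator measurableSet_Iic, Set.Ioc_inter_Iic, min_eq_right ha.2]
  simp [ha.1]

theorem lovaszExtension_card (hx : ∀ v, x v ∈ Set.Icc (0 : ℝ) 1) :
    lovaszExtension (fun K => (#K : ℝ)) x = ∑ v, x v :=
  calc lovaszExtension (fun K => (#K : ℝ)) x
      = ∫ θ in Set.Ioc (0 : ℝ) 1, ∑ v, (Set.Iic (x v)).indicator (1 : ℝ → ℝ) θ := by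
        simp [lovaszExtension, superlevel, Set.indicator_apply]
    _ = ∑ v, x v := by
        rw [integral_finsetSum _ fun v _ => integrableOn_indicator_Iic (x v)]
        exact sum_congr rfl fun v _ => setIntegral_indicator_Iic (hx v)

end LovaszExtension

section StepVector

open MeasureTheory

variable {V : Type*} [DecidableEq V] {A B : Finset V} {t : ℝ}

/-- For `A ⊆ B`, the point at parameter `t` of the segment joining the indicator vectors of `A`
and `B`. -/
def stepVector (A B : Finset V) (t : ℝ) (v : V) : ℝ :=
  if v ∈ A then 1 else if v ∈ B then t else 0

theorem monotone_stepVector (A B : Finset V) : Monotone (stepVector A B) := by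
  intro t t' htt' v
  unfold stepVector
  split_ifs <;> first | exact le_rfl | exact htt'

theorem stepVector_mem_Icc (ht : t ∈ Set.Icc (0 : ℝ) 1) (v : V) :
    stepVector A B t v ∈ Set.Icc (0 : ℝ) 1 := by
  unfold stepVector
  split_ifs
  exacts [Set.right_mem_Icc.2 zero_le_one, ht, Set.left_mem_Icc.2 zero_le_one]

theorem stepVector_zero (A B : Finset V) : stepVector A B 0 = stepVector A A 0 := by
  ext v
  simp [stepVector]

theorem stepVector_one (hAB : A ⊆ B) : stepVector A B 1 = stepVector B B 0 := by
  ext v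
  by_cases hv : v ∈ A
  · simp [stepVector, hv, hAB hv]
  · simp [stepVector, hv]

variable [Fintype V]

theorem superlevel_stepVector (hAB : A ⊆ B) {θ : ℝ} (hθ : θ ∈ Set.Ioc (0 : ℝ) 1) :
    superlevel (stepVector A B t) θ = if θ ≤ t then B else A := by
  ext v
  by_cases hA : v ∈ A
  · have hB := hAB hA
    simp only [mem_superlevel, stepVector, hA, if_true, hθ.2, true_iff]
    split_ifs <;> assumption
  · by_cases hB : v ∈ B
    · simp only [mem_superlevel, stepVector, hA, hB, if_false, if_true]
      split_ifs with hθt <;> simp [hA, hB, hθt]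
    · simp only [mem_superlevel, stepVector, hA, hB, if_false, hθ.1.not_ge, false_iff]
      split_ifs <;> assumption

theorem lovaszExtension_stepVector (g : Finset V → ℝ) (hAB : A ⊆ B)
    (ht : t ∈ Set.Icc (0 : ℝ) 1) :
    lovaszExtension g (stepVector A B t) = g A + t * (g B - g A) :=
  calc lovaszExtension g (stepVector A B t)
      = ∫ θ in Set.Ioc (0 : ℝ) 1,
          (g A + (Set.Iic t).indicator (1 : ℝ → ℝ) θ * (g B - g A)) := by
        refine setIntegral_congr_fun measurableSet_Ioc fun θ hθ => ?_
        simp only [superlevel_stepVector hAB hθ, Set.indicator_apply, Set.mem_Iic, Pi.one_apply]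
        split_ifs <;> ring
    _ = g A + t * (g B - g A) := by
        rw [integral_add (integrable_const _) ((integrableOn_indicator_Iic t).mul_const _),
          integral_mul_const, setIntegral_indicator_Iic ht]
        simp

end StepVector

section LagrangePath

variable {V : Type*} [Fintype V] {c f : Finset V → ℝ} {s lam : ℝ}

/-- A Lagrangian certificate that `x` minimizes the Lovász extension of `c` among the vectors at
which the Lovász extension of `f` is at least `s`. -/
structure IsLagrangeCertified (c f : Finset V → ℝ) (s : ℝ) (x : V → ℝ) : Prop where
  mem_Icc : ∀ v, x v ∈ Set.Icc (0 : ℝ) 1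
  lovaszExtension_eq : lovaszExtension f x = s
  exists_multiplier : ∃ lam, 0 ≤ lam ∧
    ∀ θ ∈ Set.Ioc (0 : ℝ) 1, IsLagrangeMinimizer c f lam (superlevel x θ)

theorem IsLagrangeCertified.lovaszExtension_le {x y : V → ℝ} (hx : IsLagrangeCertified c f s x)
    (hy : s ≤ lovaszExtension f y) : lovaszExtension c x ≤ lovaszExtension c y := by
  obtain ⟨lam, hlam, hmin⟩ := hx.exists_multiplier
  exact lovaszExtension_le_of_isLagrangeMinimizer hlam hmin (hx.lovaszExtension_eq.trans_le hy)

variable [DecidableEq V] {A B C : Finset V} {x y : ℝ → V → ℝ}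

theorem isLagrangeCertified_stepVector {t : ℝ} (hAB : A ⊆ B) (ht : t ∈ Set.Icc (0 : ℝ) 1)
    (hs : f A + t * (f B - f A) = s) (hlam : 0 ≤ lam) (hA : IsLagrangeMinimizer c f lam A)
    (hB : IsLagrangeMinimizer c f lam B) : IsLagrangeCertified c f s (stepVector A B t) where
  mem_Icc := stepVector_mem_Icc ht
  lovaszExtension_eq := (lovaszExtension_stepVector f hAB ht).trans hs
  exists_multiplier := by
    refine ⟨lam, hlam, fun θ hθ => ?_⟩
    rw [superlevel_stepVector hAB hθ]
    split_ifs
    exacts [hB, hA]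

/-- A coordinatewise increasing path of certified vectors from the indicator of `A` to that of `B`,
parametrized by the value `s ∈ [f A, f B]` of the Lovász extension of `f`. The indicator of `A` is
written `stepVector A A 0`. -/
structure IsLagrangePath (c f : Finset V → ℝ) (A B : Finset V) (x : ℝ → V → ℝ) : Prop where
  le : f A ≤ f B
  source : x (f A) = stepVector A A 0
  target : x (f B) = stepVector B B 0
  monotoneOn : MonotoneOn x (Set.Icc (f A) (f B))
  certified : ∀ s ∈ Set.Icc (f A) (f B), IsLagrangeCertified c f s (x s)

theorem isLagrangePath_const (hlam : 0 ≤ lam) (hA : IsLagrangeMinimizer c f lam A) :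
    IsLagrangePath c f A A fun _ => stepVector A A 0 where
  le := le_rfl
  source := rfl
  target := rfl
  monotoneOn := monotoneOn_const
  certified s hs := isLagrangeCertified_stepVector subset_rfl (Set.left_mem_Icc.2 zero_le_one)
    (by simpa using le_antisymm hs.1 hs.2) hlam hA hA

theorem isLagrangePath_segment (hAB : A ⊆ B) (hf : f A < f B) (hlam : 0 ≤ lam)
    (hA : IsLagrangeMinimizer c f lam A) (hB : IsLagrangeMinimizer c f lam B) :
    IsLagrangePath c f A B fun s => stepVector A B ((s - f A) / (f B - f A)) where
  le := hf.le
  source := by simp only [sub_self, zero_div, stepVector_zero A B]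
  target := by simp only [div_self (sub_pos.2 hf).ne', stepVector_one hAB]
  monotoneOn s _ s' _ hss' := monotone_stepVector A B <|
    div_le_div_of_nonneg_right (sub_le_sub_right hss' _) (sub_pos.2 hf).le
  certified s hs := by
    have hd : 0 < f B - f A := sub_pos.2 hf
    refine isLagrangeCertified_stepVector hAB ⟨?_, ?_⟩ ?_ hlam hA hB
    · exact div_nonneg (sub_nonneg.2 hs.1) hd.le
    · exact (div_le_one hd).2 (sub_le_sub_right hs.2 _)
    · rw [div_mul_cancel₀ _ hd.ne', add_sub_cancel]

theorem IsLagrangePath.trans (hx : IsLagrangePath c f A B x) (hy : IsLagrangePath c f B C y) :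
    IsLagrangePath c f A C fun s => if s ≤ f B then x s else y s := by
  set z : ℝ → V → ℝ := fun s => if s ≤ f B then x s else y s
  have eqOn_left : Set.EqOn x z (Set.Icc (f A) (f B)) := fun s hs => (if_pos hs.2).symm
  have eqOn_right : Set.EqOn y z (Set.Icc (f B) (f C)) := by
    rintro s ⟨hs, -⟩
    rcases hs.eq_or_lt with rfl | hlt
    · exact hy.source.trans (hx.target.symm.trans (if_pos le_rfl).symm)
    · exact (if_neg hlt.not_ge).symm
  have Icc_eq := Set.Icc_union_Icc_eq_Icc hx.le hy.le
  refine ⟨hx.le.trans hy.le, ?_, ?_, ?_, ?_⟩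
  · rw [← eqOn_left (Set.left_mem_Icc.2 hx.le), hx.source]
  · rw [← eqOn_right (Set.right_mem_Icc.2 hy.le), hy.target]
  · rw [← Icc_eq]
    exact (hx.monotoneOn.congr eqOn_left).union_right (hy.monotoneOn.congr eqOn_right)
      (isGreatest_Icc hx.le) (isLeast_Icc hy.le)
  · rw [← Icc_eq]
    rintro s (hs | hs)
    · exact eqOn_left hs ▸ hx.certified s hs
    · exact eqOn_right hs ▸ hy.certified s hs

theorem IsLagrangeMinimizer.exists_isLagrangePath
    (hc : ∀ A B, c (A ⊔ B) + c (A ⊓ B) ≤ c A + c B)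
    (hf : ∀ A B, f A + f B ≤ f (A ⊔ B) + f (A ⊓ B)) (hf_mono : Monotone f) (hlam : 0 ≤ lam)
    (hA : IsLagrangeMinimizer c f lam A) :
    ∃ B x, f B = f univ ∧ IsLagrangePath c f A B x := by
  induction A using WellFoundedGT.induction generalizing lam with
  | ind A ih =>
    rcases (hf_mono (subset_univ A)).eq_or_lt with hA_univ | hA_univ
    · exact ⟨A, _, hA_univ, isLagrangePath_const hlam hA⟩
    · obtain ⟨lam', hlam', B, hAB, hfAB, hA', hB'⟩ :=
        hA.exists_le_tie_of_lt hc hf hf_mono hlam hA_univ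
      have hAB_lt : A < B := hAB.lt_of_ne (ne_of_apply_ne f hfAB.ne)
      obtain ⟨C, y, hC, hy⟩ := ih B hAB_lt hlam' hB'
      exact ⟨C, _, hC, (isLagrangePath_segment hAB hfAB hlam' hA' hB').trans hy⟩

end LagrangePath

section MinOnEdge

variable {V : Type*} {x : V → ℝ} {e : Finset V}

theorem le_minOnEdge_iff {a : ℝ} (ha : a ≤ 1) : a ≤ minOnEdge x e ↔ ∀ v ∈ e, a ≤ x v := by
  unfold minOnEdge
  split_ifs with he
  · exact le_inf'_iff he x
  · simp [not_nonempty_iff_eq_empty.1 he, ha]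

theorem minOnEdge_le {v : V} (hv : v ∈ e) : minOnEdge x e ≤ x v := by
  rw [minOnEdge, dif_pos ⟨v, hv⟩]
  exact inf'_le x hv

theorem minOnEdge_mem_Icc (hx : ∀ v, x v ∈ Set.Icc (0 : ℝ) 1) (e : Finset V) :
    minOnEdge x e ∈ Set.Icc (0 : ℝ) 1 := by
  refine ⟨(le_minOnEdge_iff zero_le_one).2 fun v _ => (hx v).1, ?_⟩
  rcases e.eq_empty_or_nonempty with rfl | ⟨v, hv⟩
  · simp [minOnEdge]
  · exact (minOnEdge_le hv).trans (hx v).2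

end MinOnEdge

section ConformalLP

open MeasureTheory

variable {V : Type*} [DecidableEq V] {𝓔 : Finset (Finset V)} {w : Finset V → ℝ}

theorem monotone_inducedWeight (hw : ∀ e ∈ 𝓔, 0 ≤ w e) : Monotone (inducedWeight 𝓔 w) :=
  fun _ _ hAB => sum_le_sum_of_subset_of_nonneg
    (monotone_filter_right 𝓔 fun _ _ he => he.trans hAB) fun e he _ => hw e (mem_filter.1 he).1

theorem inducedWeight_add_le_sup_add_inf (hw : ∀ e ∈ 𝓔, 0 ≤ w e) (A B : Finset V) :
    inducedWeight 𝓔 w A + inducedWeight 𝓔 w B ≤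
      inducedWeight 𝓔 w (A ⊔ B) + inducedWeight 𝓔 w (A ⊓ B) := by
  have inter_eq : {e ∈ 𝓔 | e ⊆ A} ∩ {e ∈ 𝓔 | e ⊆ B} = {e ∈ 𝓔 | e ⊆ A ⊓ B} := by
    simp only [← filter_and, inf_eq_inter, subset_inter_iff]
  have union_subset : {e ∈ 𝓔 | e ⊆ A} ∪ {e ∈ 𝓔 | e ⊆ B} ⊆ {e ∈ 𝓔 | e ⊆ A ⊔ B} := by
    rw [← filter_or]
    exact monotone_filter_right 𝓔 fun e _ he =>
      he.elim (fun h => h.trans subset_union_left) fun h => h.trans subset_union_right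
  unfold inducedWeight
  rw [← sum_union_inter, inter_eq]
  exact add_le_add_left
    (sum_le_sum_of_subset_of_nonneg union_subset fun e he _ => hw e (mem_filter.1 he).1) _

variable [Fintype V] {ε : ℝ} {x : V → ℝ} {z : Finset V → ℝ}

theorem inducedWeight_univ (𝓔 : Finset (Finset V)) (w : Finset V → ℝ) :
    inducedWeight 𝓔 w univ = totalWeight 𝓔 w := by
  simp [inducedWeight, totalWeight]

theorem lovaszExtension_inducedWeight (hx : ∀ v, x v ∈ Set.Icc (0 : ℝ) 1) :
    lovaszExtension (inducedWeight 𝓔 w) x = ∑ e ∈ 𝓔, w e * minOnEdge x e :=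
  calc lovaszExtension (inducedWeight 𝓔 w) x
      = ∫ θ in Set.Ioc (0 : ℝ) 1,
          ∑ e ∈ 𝓔, w e * (Set.Iic (minOnEdge x e)).indicator (1 : ℝ → ℝ) θ := by
        refine setIntegral_congr_fun measurableSet_Ioc fun θ hθ => ?_
        simp [inducedWeight, sum_filter, Set.indicator_apply, le_minOnEdge_iff hθ.2,
          subset_iff]
    _ = ∑ e ∈ 𝓔, w e * minOnEdge x e := by
        rw [integral_finsetSum _ fun e _ => (integrableOn_indicator_Iic _).const_mul (w e)]
        refine sum_congr rfl fun e _ => ?_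
        rw [integral_const_mul, setIntegral_indicator_Iic (minOnEdge_mem_Icc hx e)]

theorem lpFeasible_minOnEdge (hx : ∀ v, x v ∈ Set.Icc (0 : ℝ) 1)
    (hcov : (1 - ε) * totalWeight 𝓔 w ≤ lovaszExtension (inducedWeight 𝓔 w) x) :
    LPFeasible 𝓔 w ε x (minOnEdge x) :=
  ⟨hx, fun e _ => minOnEdge_mem_Icc hx e, fun _ _ _ hv => minOnEdge_le hv,
    hcov.trans_eq (lovaszExtension_inducedWeight hx)⟩

theorem LPFeasible.le_lovaszExtension (hw : ∀ e ∈ 𝓔, 0 ≤ w e) (h : LPFeasible 𝓔 w ε x z) :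
    (1 - ε) * totalWeight 𝓔 w ≤ lovaszExtension (inducedWeight 𝓔 w) x := by
  obtain ⟨hx, hz, hzx, hcov⟩ := h
  rw [lovaszExtension_inducedWeight hx]
  exact hcov.trans <| sum_le_sum fun e he =>
    mul_le_mul_of_nonneg_left ((le_minOnEdge_iff (hz e he).2).2 (hzx e he)) (hw e he)

theorem exists_monotoneOn_isLagrangeCertified (hw : ∀ e ∈ 𝓔, 0 ≤ w e) :
    ∃ x : ℝ → V → ℝ,
      MonotoneOn x (Set.Icc (inducedWeight 𝓔 w ∅) (totalWeight 𝓔 w)) ∧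
      ∀ s ∈ Set.Icc (inducedWeight 𝓔 w ∅) (totalWeight 𝓔 w),
        IsLagrangeCertified (fun K => (#K : ℝ)) (inducedWeight 𝓔 w) s (x s) := by
  have card_submodular (A B : Finset V) : (#(A ⊔ B) : ℝ) + #(A ⊓ B) ≤ #A + #B := by
    exact_mod_cast (card_union_add_card_inter A B).le
  have empty_minimizer :
      IsLagrangeMinimizer (fun K => (#K : ℝ)) (inducedWeight 𝓔 w) 0 ∅ := fun K => by simp
  obtain ⟨B, x, hB, hx⟩ := empty_minimizer.exists_isLagrangePath card_submodular
    (inducedWeight_add_le_sup_add_inf hw) (monotone_inducedWeight hw) le_rfl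
  rw [← inducedWeight_univ, ← hB]
  exact ⟨x, hx.monotoneOn, hx.certified⟩

end ConformalLP

theorem monotone_threshold_rounding_general {V : Type*} [Fintype V] [DecidableEq V]
    (𝓔 : Finset (Finset V)) (w : Finset V → ℝ) (hw : ∀ e ∈ 𝓔, 0 ≤ w e) :
    ∃ x : ℝ → V → ℝ,
      (∀ τ ∈ Set.Icc (0 : ℝ) 1,
        LPFeasible 𝓔 w (1 - τ) (x τ) (minOnEdge (x τ)) ∧
        ∀ (x' : V → ℝ) (z' : Finset V → ℝ),
          LPFeasible 𝓔 w (1 - τ) x' z' → ∑ v, x τ v ≤ ∑ v, x' v) ∧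
      MonotoneOn x (Set.Icc 0 1) ∧
      (∀ τ ∈ Set.Icc (0 : ℝ) 1, ∃ lam : ℝ, 0 ≤ lam ∧ ∀ ρ ∈ Set.Ioc (0 : ℝ) 1,
        ∀ K : Finset V, lagObj 𝓔 w {v | ρ ≤ x τ v} lam ≤ lagObj 𝓔 w K lam) := by
  obtain ⟨x, hx_mono, hx⟩ := exists_monotoneOn_isLagrangeCertified hw
  -- Empty hyperedges are covered for free, so no smaller coverage than `e(∅)` ever occurs.
  let s (τ : ℝ) : ℝ := max (inducedWeight 𝓔 w ∅) (τ * totalWeight 𝓔 w)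
  have hW : 0 ≤ totalWeight 𝓔 w := sum_nonneg hw
  have s_mono : Monotone s := fun τ τ' hττ' =>
    max_le_max le_rfl (mul_le_mul_of_nonneg_right hττ' hW)
  have s_mem {τ : ℝ} (hτ : τ ∈ Set.Icc (0 : ℝ) 1) :
      s τ ∈ Set.Icc (inducedWeight 𝓔 w ∅) (totalWeight 𝓔 w) :=
    ⟨le_max_left _ _, max_le (inducedWeight_univ 𝓔 w ▸
      monotone_inducedWeight hw (empty_subset _)) (mul_le_of_le_one_left hW hτ.2)⟩
  refine ⟨fun τ => x (s τ), fun τ hτ => ⟨?_, fun x' z' h' => ?_⟩,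
    fun τ hτ τ' hτ' hττ' => hx_mono (s_mem hτ) (s_mem hτ') (s_mono hττ'),
    fun τ hτ => (hx _ (s_mem hτ)).exists_multiplier⟩
  · refine lpFeasible_minOnEdge (hx _ (s_mem hτ)).mem_Icc ?_
    rw [(hx _ (s_mem hτ)).lovaszExtension_eq, sub_sub_cancel]
    exact le_max_right _ _
  · have coverage_le : s τ ≤ lovaszExtension (inducedWeight 𝓔 w) x' :=
      max_le (le_lovaszExtension (fun K => monotone_inducedWeight hw (empty_subset K)) x')
        (sub_sub_cancel 1 τ ▸ h'.le_lovaszExtension hw)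
    have := (hx _ (s_mem hτ)).lovaszExtension_le coverage_le
    rwa [lovaszExtension_card (hx _ (s_mem hτ)).mem_Icc, lovaszExtension_card h'.1] at this

/-- monotonicity of threshold rounding: there is a family of
optimal LP solutions whose `ρ`-threshold roundings `K_τ` are nested in `τ`,
and each `K_τ` is a Lagrangian minimizer for some multiplier `λ ≥ 0`. -/
theorem monotone_threshold_rounding {V : Type*} [Fintype V] [DecidableEq V]
    (𝓔 : Finset (Finset V)) (w : Finset V → ℝ) (hw : ∀ e ∈ 𝓔, 0 ≤ w e)
    (ρ : ℝ) (hρ : ρ ∈ Set.Ioc (0:ℝ) 1) :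
    ∃ x : ℝ → V → ℝ,
      -- for each τ ∈ [0,1], x(τ) (with z_e = min_{v∈e} x_v(τ)) is an optimal
      -- solution of the LP at coverage parameter ε = 1 - τ
      (∀ τ ∈ Set.Icc (0:ℝ) 1,
        LPFeasible 𝓔 w (1 - τ) (x τ) (minOnEdge (x τ)) ∧
        ∀ (x' : V → ℝ) (z' : Finset V → ℝ),
          LPFeasible 𝓔 w (1 - τ) x' z' → ∑ v, x τ v ≤ ∑ v, x' v) ∧
      -- (i) the rounded sets are nested
      (∀ τ₁ ∈ Set.Icc (0:ℝ) 1, ∀ τ₂ ∈ Set.Icc (0:ℝ) 1, τ₁ < τ₂ →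
        Finset.univ.filter (fun v => ρ ≤ x τ₁ v) ⊆
          Finset.univ.filter (fun v => ρ ≤ x τ₂ v)) ∧
      -- (ii) each rounded set is a Lagrangian minimizer for some λ ≥ 0
      (∀ τ ∈ Set.Icc (0:ℝ) 1, ∃ lam : ℝ, 0 ≤ lam ∧
        ∀ K : Finset V,
          lagObj 𝓔 w (Finset.univ.filter (fun v => ρ ≤ x τ v)) lam ≤
            lagObj 𝓔 w K lam) := by
  obtain ⟨x, hopt, hmono, hlag⟩ := monotone_threshold_rounding_general 𝓔 w hw
  exact ⟨x, hopt,
    fun _ h₁ _ h₂ h₁₂ => monotone_filter_right _ fun v _ hv => hv.trans (hmono h₁ h₂ h₁₂.le v),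
    fun τ hτ => (hlag τ hτ).imp fun _ h => ⟨h.1, h.2 ρ hρ⟩⟩
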